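/- Let G be any finite simple graph with at least one edge and let I = I(G) be its edge ideal. Then for all q ≥ 1, reg I^q ≥ 2q + ν(G) − 1, where ν(G) is the induced matching number of G. -/

import Mathlib

/-!
The regularity bounds the degrees in which Koszul homology lives: if an ideal `J` has a graded free
resolution whose `i`-th module is generated in degrees at most `r + i`, then a Koszul cycle of
homological degree `p` with coefficients in `J` homogeneous of degree greater than `r` is the
boundary of a Koszul chain with coefficients in `J` (`GradedFreeRes.koszul_vanishing`). This is
proved by the zigzag comparing the resolution with the Koszul complex, so that no Tor functors are
needed. It therefore suffices to exhibit, for `J = I(G) ^ (q + 1)` and `ν(G) = N + 1`, a cycle of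
homological degree `N` with coefficients of degree `2 q + N + 2` in `J` which is not such a boundary.

Let `{a i, b i}`, `0 ≤ i ≤ N`, be an induced matching, let `σ` be the Koszul basis element
`a 0 ∧ ... ∧ a N` and `μ = (∏ b i) (a 0 b 0) ^ q`. The coefficients of `∂ (μ σ)` are, up to sign, the
monomials `a k μ`, which lie in `I(G) ^ (q + 1)` although `μ` itself need not. To see that the class
of `∂ (μ σ)` is nonzero, consider the multidegree `alpha a b q` of `μ σ` and the cochain `phi`, a
determinant of indicators of the edges of the matching. Its coboundary is the determinant of
`detMat`, equal to `1` on `σ`. A tuple of matched vertices at which it is nonzero meets every edge of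
the matching (`exists_hit`), hence exactly once. Such a tuple, together with the unmatched vertices, forms a vertex cover containing
exactly one end of each matched edge, because the matching is induced. A monomial of
`I(G) ^ (q + 1)` has weight at least `q + 1` on this cover, whereas the coefficient of the tuple in
multidegree `alpha a b q` has weight `q` (`coeff_eq_zero`). Hence evaluation of `phi` on `∂ c` is `0`
in this multidegree for every chain `c` with coefficients in `I(G) ^ (q + 1)`, but is `1` for `μ σ`.

Finally, `reg` is an infimum over resolutions, so a resolution must exist for the bound to hold.
Powers of edge ideals are generated by monomials, and the Taylor complex of these monomials is a
finite graded free resolution (`taylorRes`). Its exactness follows from a contracting homotopy in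
each multidegree: put in front of a tuple the least index of a monomial dividing the given
multidegree. The Koszul complex is the special case where the monomials are the variables.
-/

open MvPolynomial

/-- The edge ideal `I(G)` of a finite simple graph `G` on vertex set `{x_1, ..., x_n}`:
the ideal of `S = K[x_1, ..., x_n]` generated by the monomials `x_i * x_j` for the
edges `{x_i, x_j}` of `G`. -/
noncomputable def edgeIdeal (K : Type) [Field K] {n : ℕ} (G : SimpleGraph (Fin n)) :
    Ideal (MvPolynomial (Fin n) K) :=
  Ideal.span { m | ∃ i j, G.Adj i j ∧ m = X i * X j }

/-- A finite graded free resolution of an ideal `I` of the polynomial ring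
`S = K[x_1, ..., x_n]`.  The `i`-th free module is `F i = ⨁_a S(-shift i a)`,
realized as `Fin (rank i) → S`; the differentials and the augmentation `F 0 → I ⊆ S`
are degree-preserving (each matrix entry is homogeneous of the appropriate degree),
and the complex `0 → F len → ⋯ → F 1 → F 0 → I → 0` is exact. -/
structure GradedFreeRes {n : ℕ} (K : Type) [Field K]
    (I : Ideal (MvPolynomial (Fin n) K)) where
  len : ℕ
  rank : ℕ → ℕ
  rank_zero : ∀ i, len < i → rank i = 0
  shift : (i : ℕ) → Fin (rank i) → ℕ
  d : (i : ℕ) →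
    ((Fin (rank (i + 1)) → MvPolynomial (Fin n) K) →ₗ[MvPolynomial (Fin n) K]
      (Fin (rank i) → MvPolynomial (Fin n) K))
  aug : (Fin (rank 0) → MvPolynomial (Fin n) K) →ₗ[MvPolynomial (Fin n) K]
      MvPolynomial (Fin n) K
  aug_range : LinearMap.range aug = I
  exact_zero : LinearMap.ker aug = LinearMap.range (d 0)
  exact_succ : ∀ i, LinearMap.ker (d i) = LinearMap.range (d (i + 1))
  homog_aug : ∀ a, (aug (Pi.single a 1)).IsHomogeneous (shift 0 a)
  homog_d : ∀ i (b : Fin (rank (i + 1))) (a : Fin (rank i)),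
    d i (Pi.single b 1) a = 0 ∨
      ∃ e, shift (i + 1) b = shift i a + e ∧ (d i (Pi.single b 1) a).IsHomogeneous e

/-- The Castelnuovo–Mumford regularity of an ideal `I ⊆ K[x_1, ..., x_n]`:
the least integer `r` such that `I` admits a (finite) graded free resolution whose
`i`-th free module is generated in degrees `≤ r + i`.  The minimum is attained by the
minimal graded free resolution, so this agrees with the usual definition
`reg I = max { j - i : β_{i,j}(I) ≠ 0 }`. -/
noncomputable def reg {n : ℕ} (K : Type) [Field K]
    (I : Ideal (MvPolynomial (Fin n) K)) : ℤ :=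
  sInf { r : ℤ | ∃ F : GradedFreeRes K I,
    ∀ i, ∀ a : Fin (F.rank i), (F.shift i a : ℤ) - (i : ℤ) ≤ r }

/-- An induced matching of `G`: a set of edges of `G` that are pairwise vertex-disjoint
and such that the induced subgraph of `G` on the vertices of these edges contains no
other edge (no edge of `G` joins two distinct edges of the matching). -/
def IsInducedMatching {V : Type} (G : SimpleGraph V) (M : Finset (Sym2 V)) : Prop :=
  (↑M ⊆ G.edgeSet) ∧
    ∀ e ∈ M, ∀ f ∈ M, e ≠ f → ∀ u ∈ e, ∀ v ∈ f, u ≠ v ∧ ¬ G.Adj u v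

/-- The induced matching number `ν(G)`: the maximum size of an induced matching of `G`. -/
noncomputable def indMatchNum {V : Type} (G : SimpleGraph V) : ℕ :=
  sSup { k | ∃ M : Finset (Sym2 V), IsInducedMatching G M ∧ M.card = k }

/-! ### Increasing tuples and the Taylor complex -/

/-- Strictly increasing `p`-tuples in `Fin s`, indexing the faces of a simplex. -/
abbrev Inc (s p : ℕ) : Type := {t : Fin p → Fin s // StrictMono t}

namespace Inc

variable {s p : ℕ}

noncomputable instance : Fintype (Inc s p) := Fintype.ofFinite _

/-- The face of a tuple obtained by dropping the entry at position `k`. -/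
def face (t : Inc s (p + 1)) (k : Fin (p + 1)) : Inc s p :=
  ⟨t.1 ∘ k.succAbove, t.2.comp (Fin.strictMono_succAbove k)⟩

/-- The tuple obtained by putting a smaller entry in front. -/
def cons (v : Fin s) (t : Inc s p) (h : ∀ k, v < t.1 k) : Inc s (p + 1) :=
  ⟨Fin.cons v t.1, by
    refine Fin.cases (fun j hj => ?_) (fun i j hj => ?_)
    · obtain ⟨j, rfl⟩ := Fin.exists_succ_eq.2 hj.ne'
      simpa using h j
    · obtain ⟨j, rfl⟩ := Fin.exists_succ_eq.2 (Fin.ne_zero_of_lt hj)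
      simpa using t.2 (Fin.succ_lt_succ_iff.1 hj)⟩

theorem face_cons_zero (v : Fin s) (t : Inc s p) (h) : (cons v t h).face 0 = t := by
  ext k; simp [face, cons]

theorem face_cons_succ (v : Fin s) (t : Inc s (p + 1)) (h) (k : Fin (p + 1)) :
    (cons v t h).face k.succ = cons v (t.face k) (fun j => h (k.succAbove j)) := by
  apply Subtype.ext
  funext j
  refine Fin.cases ?_ (fun j => ?_) j <;> simp [face, cons, Fin.removeNth]

theorem face_face (t : Inc s (p + 2)) (k : Fin (p + 2)) (l : Fin (p + 1)) :
    (t.face (k.succAbove l)).face (l.predAbove k) = (t.face k).face l := by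
  apply Subtype.ext
  funext j
  simp [face, Fin.succAbove_succAbove_succAbove_predAbove]

end Inc

section Taylor

variable {n s : ℕ} (m : Fin s → (Fin n →₀ ℕ))

/-- The exponent of the least common multiple of the monomials indexed by the tuple `t`. -/
noncomputable def lcmExp {p : ℕ} (t : Inc s p) : Fin n →₀ ℕ := Finset.univ.sup (fun k => m (t.1 k))

theorem lcmExp_le_iff {p : ℕ} (t : Inc s p) (a : Fin n →₀ ℕ) :
    lcmExp m t ≤ a ↔ ∀ k, m (t.1 k) ≤ a := by
  simp [lcmExp, Finset.sup_le_iff]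

theorem lcmExp_face_le {p : ℕ} (t : Inc s (p + 1)) (k : Fin (p + 1)) :
    lcmExp m (t.face k) ≤ lcmExp m t :=
  (lcmExp_le_iff m _ _).2 fun _ => (lcmExp_le_iff m t _).1 le_rfl _

variable (K : Type) [Field K]

/-- The entry of the Taylor differential from `t` to its `k`-th face, up to sign. -/
noncomputable def taylorCoeff {p : ℕ} (t : Inc s (p + 1)) (k : Fin (p + 1)) :
    MvPolynomial (Fin n) K :=
  monomial (lcmExp m t - lcmExp m (t.face k)) 1

variable {K} {M N : Type} [AddCommGroup M] [Module (MvPolynomial (Fin n) K) M]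
  [AddCommGroup N] [Module (MvPolynomial (Fin n) K) N]

open Classical in
/-- The differential of the Taylor complex of the monomials `x ^ m i`, with coefficients in a
module `M`. If `x ^ m i` is the `i`-th variable, this is the Koszul complex on the variables. Chains of degree `p` are
functions on increasing `p`-tuples, so the augmentation sits in degree `0`. -/
noncomputable def bdry (m : Fin s → (Fin n →₀ ℕ)) (p : ℕ) :
    (Inc s (p + 1) → M) →ₗ[MvPolynomial (Fin n) K] (Inc s p → M) :=
  ∑ t : Inc s (p + 1), ∑ k : Fin (p + 1), ((-1 : MvPolynomial (Fin n) K) ^ (k : ℕ) * taylorCoeff m K t k) •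
    (LinearMap.single (MvPolynomial (Fin n) K) (fun _ : Inc s p => M) (t.face k) ∘ₗ
      LinearMap.proj t)

theorem bdry_apply {p : ℕ} (c : Inc s (p + 1) → M) [DecidableEq (Inc s p)] :
    bdry (K := K) m p c = ∑ t : Inc s (p + 1), ∑ k : Fin (p + 1),
      ((-1 : MvPolynomial (Fin n) K) ^ (k : ℕ) * taylorCoeff m K t k) • Pi.single (t.face k) (c t) := by
  simp only [bdry, LinearMap.sum_apply, LinearMap.smul_apply, LinearMap.comp_apply,
    LinearMap.proj_apply, LinearMap.single_apply]
  congr!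

theorem bdry_single {p : ℕ} [DecidableEq (Inc s p)] [DecidableEq (Inc s (p + 1))]
    (t : Inc s (p + 1)) (x : M) :
    bdry (K := K) m p (Pi.single t x) = ∑ k : Fin (p + 1),
      ((-1 : MvPolynomial (Fin n) K) ^ (k : ℕ) * taylorCoeff m K t k) • Pi.single (t.face k) x := by
  rw [bdry_apply, Finset.sum_eq_single t]
  · simp
  · intro u _ hu
    simp [Pi.single_eq_of_ne hu]
  · simp

theorem bdry_map {p : ℕ} (f : M →ₗ[MvPolynomial (Fin n) K] N) (c : Inc s (p + 1) → M) :
    bdry (K := K) m p (fun t => f (c t)) = fun u => f (bdry (K := K) m p c u) := by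
  classical
  funext u
  rw [bdry_apply, bdry_apply]
  simp only [Finset.sum_apply, map_sum, Pi.smul_apply, map_smul]
  refine Finset.sum_congr rfl fun t _ => Finset.sum_congr rfl fun k _ => ?_
  congr 1
  by_cases h : u = t.face k
  · subst h; simp
  · simp [Pi.single_eq_of_ne h]

theorem taylorCoeff_mul {p : ℕ} (t : Inc s (p + 2)) (k : Fin (p + 2)) (l : Fin (p + 1)) :
    taylorCoeff m K t k * taylorCoeff m K (t.face k) l =
      monomial (lcmExp m t - lcmExp m ((t.face k).face l)) 1 := by
  rw [taylorCoeff, taylorCoeff, monomial_mul, mul_one, tsub_add_tsub_cancel]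
  exacts [lcmExp_face_le m _ _, lcmExp_face_le m _ _]

theorem bdry_bdry {p : ℕ} (c : Inc s (p + 2) → M) :
    bdry (K := K) m p (bdry (K := K) m (p + 1) c) = 0 := by
  classical
  rw [bdry_apply m c]
  simp only [map_sum, map_smul]
  refine Finset.sum_eq_zero fun t _ => ?_
  simp only [bdry_single, Finset.smul_sum, smul_smul]
  rw [← Finset.univ.sum_product' Finset.univ (fun (k : Fin (p + 2)) (l : Fin (p + 1)) =>
    ((-1 : MvPolynomial (Fin n) K) ^ (k : ℕ) * taylorCoeff m K t k *
      ((-1) ^ (l : ℕ) * taylorCoeff m K (t.face k) l)) •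
      (Pi.single ((t.face k).face l) (c t) : Inc s p → M))]
  -- Faces of codimension two come in pairs with opposite signs.
  refine Finset.sum_involution (fun kl _ => (kl.1.succAbove kl.2, kl.2.predAbove kl.1)) ?_ ?_ ?_ ?_
  · rintro ⟨k, l⟩ -
    have e : ∀ (k : Fin (p + 2)) (l : Fin (p + 1)),
        ((-1 : MvPolynomial (Fin n) K) ^ (k : ℕ) * taylorCoeff m K t k *
          ((-1) ^ (l : ℕ) * taylorCoeff m K (t.face k) l)) =
        (-1) ^ (k + l : ℕ) * monomial (lcmExp m t - lcmExp m ((t.face k).face l)) 1 := by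
      intro k l
      rw [← taylorCoeff_mul, pow_add]; ring
    simp only [e, Inc.face_face, Fin.neg_one_pow_succAbove_add_predAbove]
    simp
  · rintro ⟨k, l⟩ - -
    simp [Prod.ext_iff, Fin.succAbove_ne]
  · simp
  · rintro ⟨k, l⟩ -
    simp [Fin.succAbove_succAbove_predAbove, Fin.predAbove_predAbove_succAbove]

end Taylor

/-! ### Exactness of the Taylor complex -/

section Homotopy

variable {n s : ℕ} (m : Fin s → (Fin n →₀ ℕ)) (K : Type) [Field K]

open Classical in
/-- The basis element of the Taylor complex of multidegree `a` supported at the tuple `t`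
(meaningful if `lcmExp m t ≤ a`). -/
noncomputable def strand {p : ℕ} (t : Inc s p) (a : Fin n →₀ ℕ) :
    Inc s p → MvPolynomial (Fin n) K :=
  Pi.single t (monomial (a - lcmExp m t) 1)

open Classical in
/-- The value of the contracting homotopy on `strand m K t a`: put in front of `t` the least
index `v` such that `x ^ m v` divides `x ^ a`. -/
noncomputable def htpyTerm {p : ℕ} (t : Inc s p) (a : Fin n →₀ ℕ) :
    Inc s (p + 1) → MvPolynomial (Fin n) K :=
  if h : ∃ v, IsLeast {i | m i ≤ a} v ∧ ∀ k, v < t.1 k then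
    strand m K (Inc.cons h.choose t h.choose_spec.2) a else 0

/-- The contracting homotopy of the Taylor complex. It preserves the multidegree but is only
`K`-linear. -/
noncomputable def htpy (p : ℕ) :
    (Inc s p → MvPolynomial (Fin n) K) →ₗ[K] (Inc s (p + 1) → MvPolynomial (Fin n) K) :=
  ∑ t : Inc s p, ((basisMonomials (Fin n) K).constr K
    (fun b => htpyTerm m K t (b + lcmExp m t))) ∘ₗ LinearMap.proj t

variable {m K}

theorem htpy_strand {p : ℕ} {t : Inc s p} {a : Fin n →₀ ℕ} (h : lcmExp m t ≤ a) :
    htpy m K p (strand m K t a) = htpyTerm m K t a := by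
  classical
  rw [htpy, LinearMap.sum_apply, Finset.sum_eq_single t]
  · rw [LinearMap.comp_apply, LinearMap.proj_apply, strand, Pi.single_eq_same]
    have := (basisMonomials (Fin n) K).constr_basis K
      (fun b => htpyTerm m K t (b + lcmExp m t)) (a - lcmExp m t)
    rw [coe_basisMonomials] at this
    rw [this, tsub_add_cancel_of_le h]
  · intro u _ hu
    simp [strand, Pi.single_eq_of_ne hu]
  · simp

theorem bdry_strand {p : ℕ} {t : Inc s (p + 1)} {a : Fin n →₀ ℕ} (h : lcmExp m t ≤ a) :
    bdry (K := K) m p (strand m K t a) =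
      ∑ k : Fin (p + 1), (-1 : K) ^ (k : ℕ) • strand m K (t.face k) a := by
  classical
  rw [strand, bdry_single]
  refine Finset.sum_congr rfl fun k _ => ?_
  rw [strand, ← Pi.single_smul, ← Pi.single_smul]
  congr 1
  rw [smul_eq_mul, taylorCoeff, mul_assoc, monomial_mul, mul_one, smul_eq_C_mul, map_pow, map_neg,
    C_1, add_comm (_ - _), tsub_add_tsub_cancel h (lcmExp_face_le m _ _)]

theorem htpyTerm_pos {p : ℕ} {t : Inc s p} {a : Fin n →₀ ℕ} {v : Fin s}
    (hv : IsLeast {i | m i ≤ a} v) (h : ∀ k, v < t.1 k) :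
    htpyTerm m K t a = strand m K (Inc.cons v t h) a := by
  have hex : ∃ v, IsLeast {i | m i ≤ a} v ∧ ∀ k, v < t.1 k := ⟨v, hv, h⟩
  rw [htpyTerm, dif_pos hex]
  have := hex.choose_spec.1.unique hv
  congr!

theorem htpyTerm_neg {p : ℕ} {t : Inc s p} {a : Fin n →₀ ℕ} {v : Fin s}
    (hv : IsLeast {i | m i ≤ a} v) (h : ¬ ∀ k, v < t.1 k) : htpyTerm m K t a = 0 := by
  rw [htpyTerm, dif_neg]
  rintro ⟨w, hw, hw'⟩
  exact h (hw.unique hv ▸ hw')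

theorem htpy_identity_strand {p : ℕ} {t : Inc s (p + 1)} {a : Fin n →₀ ℕ} (h : lcmExp m t ≤ a) :
    bdry (K := K) m (p + 1) (htpy m K (p + 1) (strand m K t a)) +
      htpy m K p (bdry (K := K) m p (strand m K t a)) = strand m K t a := by
  have hle := (lcmExp_le_iff m t a).1 h
  obtain ⟨v, hv⟩ : ∃ v, IsLeast {i | m i ≤ a} v := by
    have := ((Set.toFinite {i | m i ≤ a}).exists_minimal ⟨_, hle 0⟩)
    obtain ⟨v, hv⟩ := this
    exact ⟨v, hv.1, fun w hw => (le_total v w).elim id fun h' => hv.2 hw h'⟩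
  have hface : ∀ k, lcmExp m (t.face k) ≤ a := fun k => (lcmExp_face_le m t k).trans h
  rw [htpy_strand h, bdry_strand h, map_sum]
  simp only [map_smul, htpy_strand (hface _)]
  by_cases hlt : ∀ k, v < t.1 k
  · have hcons : lcmExp m (Inc.cons v t hlt) ≤ a := by
      rw [lcmExp_le_iff]
      exact Fin.cases hv.1 hle
    rw [htpyTerm_pos hv hlt, bdry_strand hcons, Fin.sum_univ_succ, Inc.face_cons_zero,
      add_assoc, ← Finset.sum_add_distrib, Finset.sum_eq_zero, add_zero]
    · simp
    · intro k _
      rw [htpyTerm_pos (t := t.face k) hv (fun j => hlt _), Inc.face_cons_succ, Fin.val_succ, pow_succ]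
      simp
  · rw [htpyTerm_neg hv hlt, map_zero, zero_add]
    have h0 : v = t.1 0 := by
      push Not at hlt
      obtain ⟨k, hk⟩ := hlt
      exact le_antisymm (hv.2 (hle 0)) ((t.2.monotone (Fin.zero_le k)).trans hk)
    have h1 : ∀ k, v < (t.face 0).1 k := by
      intro k
      rw [h0]
      exact t.2 (by simp [Fin.succ_pos])
    rw [Finset.sum_eq_single 0]
    · rw [htpyTerm_pos hv h1, Fin.val_zero, pow_zero, one_smul]
      congr 1
      apply Subtype.ext
      funext k
      refine Fin.cases ?_ (fun k => ?_) k <;> simp [Inc.cons, Inc.face, h0]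
    · intro k _ hk
      rw [htpyTerm_neg hv, smul_zero]
      intro hall
      obtain ⟨p, rfl⟩ : ∃ p', p = p' + 1 := by
        cases p with
        | zero => exact absurd (Fin.fin_one_eq_zero k) hk
        | succ p => exact ⟨p, rfl⟩
      have := hall 0
      simp [Inc.face, Fin.succAbove_ne_zero_zero hk, h0] at this
    · simp

theorem htpy_identity {p : ℕ} (c : Inc s (p + 1) → MvPolynomial (Fin n) K) :
    bdry (K := K) m (p + 1) (htpy m K (p + 1) c) + htpy m K p (bdry (K := K) m p c) = c := by
  classical
  have key : ((bdry (K := K) m (p + 1)).restrictScalars K) ∘ₗ htpy m K (p + 1) +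
      htpy m K p ∘ₗ ((bdry (K := K) m p).restrictScalars K) =
      (LinearMap.id : (Inc s (p + 1) → MvPolynomial (Fin n) K) →ₗ[K] _) := by
    refine LinearMap.pi_ext' fun t => (basisMonomials (Fin n) K).ext fun b => ?_
    have := htpy_identity_strand (K := K) (m := m) (t := t) (a := b + lcmExp m t) le_add_self
    simpa [strand] using this
  exact LinearMap.congr_fun key c

/-- Exactness of the Taylor complex in positive degrees. -/
theorem exists_bdry_eq {p : ℕ} {c : Inc s (p + 1) → MvPolynomial (Fin n) K}
    (h : bdry (K := K) m p c = 0) : ∃ b, bdry (K := K) m (p + 1) b = c :=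
  ⟨htpy m K (p + 1) c, by
    have := htpy_identity (K := K) (m := m) c
    rwa [h, map_zero, add_zero] at this⟩

theorem exists_bdry_eq_pi {p r : ℕ} {c : Inc s (p + 1) → (Fin r → MvPolynomial (Fin n) K)}
    (h : bdry (K := K) m p c = 0) : ∃ b, bdry (K := K) m (p + 1) b = c := by
  have h1 : ∀ i, ∃ b, bdry (K := K) m (p + 1) b = fun t => c t i := by
    intro i
    apply exists_bdry_eq
    refine (bdry_map m (LinearMap.proj (R := MvPolynomial (Fin n) K)
      (φ := fun _ : Fin r => MvPolynomial (Fin n) K) i) c).trans ?_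
    rw [h]
    rfl
  choose b hb using h1
  refine ⟨fun t i => b i t, ?_⟩
  funext t i
  have := bdry_map (K := K) m (LinearMap.proj (R := MvPolynomial (Fin n) K)
      (φ := fun _ : Fin r => MvPolynomial (Fin n) K) i) (fun t i => b i t)
  exact (congrFun this t).symm.trans (congrFun (hb i) t)

/-- The unique increasing tuple of length zero. -/
def Inc.nil (s : ℕ) : Inc s 0 := ⟨Fin.elim0, fun i => i.elim0⟩

instance (s : ℕ) : Unique (Inc s 0) := ⟨⟨Inc.nil s⟩, fun _ => Subtype.ext (funext fun i => i.elim0)⟩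

/-- The image of the last Taylor differential is the ideal generated by the monomials. -/
theorem range_bdry_zero :
    LinearMap.range (LinearMap.proj (Inc.nil s) ∘ₗ bdry (K := K) (M := MvPolynomial (Fin n) K) m 0) =
      Ideal.span (Set.range fun i => monomial (m i) (1 : K)) := by
  classical
  have e : ∀ t : Inc s 1, (LinearMap.proj (Inc.nil s) ∘ₗ bdry (K := K) m 0) (Pi.single t 1) =
      monomial (m (t.1 0)) (1 : K) := by
    intro t
    have h1 : lcmExp m t = m (t.1 0) := by simp [lcmExp]
    have h2 : lcmExp m (Inc.nil s) = 0 := by simp [lcmExp]; rfl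
    have h3 : t.face 0 = Inc.nil s := Subsingleton.elim _ _
    simp only [LinearMap.comp_apply, bdry_single]
    simp [taylorCoeff, h1, h2, h3]
  apply le_antisymm
  · rintro _ ⟨c, rfl⟩
    rw [← Finset.univ_sum_single c, map_sum]
    refine Ideal.sum_mem _ fun t _ => ?_
    rw [show (Pi.single t (c t) : Inc s 1 → MvPolynomial (Fin n) K) = c t • Pi.single t 1 by
      rw [← Pi.single_smul]; simp, map_smul, e]
    exact Ideal.mul_mem_left _ _ (Ideal.subset_span ⟨_, rfl⟩)
  · refine Ideal.span_le.2 ?_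
    rintro _ ⟨i, rfl⟩
    exact ⟨_, e ⟨fun _ => i, Subsingleton.strictMono _⟩⟩

end Homotopy

/-! ### The Taylor resolution of a monomial ideal -/

section Resolution

variable {n s : ℕ} (m : Fin s → (Fin n →₀ ℕ)) (K : Type) [Field K]

theorem degree_lcmExp_face {p : ℕ} (t : Inc s (p + 1)) (k : Fin (p + 1)) :
    (lcmExp m t).degree = (lcmExp m (t.face k)).degree +
      (lcmExp m t - lcmExp m (t.face k)).degree := by
  rw [← map_add, add_tsub_cancel_of_le (lcmExp_face_le m t k)]

/-- The Taylor differential is homogeneous if the basis element at `t` has the degree of the least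
common multiple indexed by `t`. -/
theorem bdry_homog {p : ℕ} [DecidableEq (Inc s (p + 1))] (t : Inc s (p + 1)) (u : Inc s p) :
    bdry (K := K) m p (Pi.single t (1 : MvPolynomial (Fin n) K)) u = 0 ∨
      ∃ e, (lcmExp m t).degree = (lcmExp m u).degree + e ∧
        (bdry (K := K) m p (Pi.single t (1 : MvPolynomial (Fin n) K)) u).IsHomogeneous e := by
  classical
  by_cases hu : ∃ k, u = t.face k
  · right
    obtain ⟨k, rfl⟩ := hu
    refine ⟨_, degree_lcmExp_face m t k, ?_⟩
    rw [bdry_single, Finset.sum_apply]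
    refine IsHomogeneous.sum _ _ _ fun l _ => ?_
    by_cases hl : t.face k = t.face l
    · have : (((-1 : MvPolynomial (Fin n) K) ^ (l : ℕ) * taylorCoeff m K t l) •
          (Pi.single (t.face l) 1 : Inc s p → MvPolynomial (Fin n) K)) (t.face k) =
          C ((-1 : K) ^ (l : ℕ)) * monomial (lcmExp m t - lcmExp m (t.face k)) 1 := by
        simp [hl, taylorCoeff]
      rw [this]
      exact (isHomogeneous_monomial _ rfl).C_mul _
    · simpa [Pi.single_eq_of_ne hl] using isHomogeneous_zero _ _ _
  · left
    push Not at hu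
    rw [bdry_single, Finset.sum_apply]
    exact Finset.sum_eq_zero fun k _ => by simp [Pi.single_eq_of_ne (hu k)]

/-- Reindexing of the chains by an initial segment of the natural numbers. -/
noncomputable def reindex (p : ℕ) :
    (Fin (Fintype.card (Inc s p)) → MvPolynomial (Fin n) K) ≃ₗ[MvPolynomial (Fin n) K]
      (Inc s p → MvPolynomial (Fin n) K) :=
  LinearEquiv.funCongrLeft _ _ (Fintype.equivFin (Inc s p))

theorem reindex_single {p : ℕ} [DecidableEq (Inc s p)] (b : Fin (Fintype.card (Inc s p))) :
    reindex (n := n) K p (Pi.single b 1) = Pi.single ((Fintype.equivFin (Inc s p)).symm b) 1 := by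
  funext t
  simp [reindex, LinearEquiv.funCongrLeft, LinearMap.funLeft, Pi.single_apply,
    Equiv.eq_symm_apply]

/-- The Taylor resolution of the ideal generated by the monomials `x ^ m i`. -/
noncomputable def taylorRes :
    GradedFreeRes K (Ideal.span (Set.range fun i => monomial (m i) (1 : K))) where
  len := s
  rank i := Fintype.card (Inc s (i + 1))
  rank_zero i hi := by
    rw [Fintype.card_eq_zero_iff]
    refine ⟨fun t => ?_⟩
    have := Fintype.card_le_of_injective t.1 t.2.injective
    simp at this
    omega
  shift i a := (lcmExp m ((Fintype.equivFin (Inc s (i + 1))).symm a)).degree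
  d i := (reindex K (i + 1)).symm.toLinearMap ∘ₗ bdry m (i + 1) ∘ₗ (reindex K (i + 2)).toLinearMap
  aug := (LinearMap.proj (Inc.nil s) ∘ₗ bdry m 0) ∘ₗ (reindex K 1).toLinearMap
  aug_range := by
    rw [LinearMap.range_comp, LinearEquiv.range, Submodule.map_top, range_bdry_zero]
  exact_zero := by
    ext c
    simp only [LinearMap.mem_ker, LinearMap.mem_range, LinearMap.comp_apply,
      LinearEquiv.coe_coe, LinearMap.proj_apply]
    constructor
    · intro h
      have h' : bdry m 0 (reindex K 1 c) = 0 := funext fun u => by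
        rw [Subsingleton.elim u (Inc.nil s), h]; rfl
      obtain ⟨b, hb⟩ := exists_bdry_eq h'
      exact ⟨(reindex K 2).symm b, by simp [hb]⟩
    · rintro ⟨b, rfl⟩
      rw [LinearEquiv.apply_symm_apply, bdry_bdry]; rfl
  exact_succ i := by
    ext c
    simp only [LinearMap.mem_ker, LinearMap.mem_range, LinearMap.comp_apply,
      LinearEquiv.coe_coe, LinearEquiv.map_eq_zero_iff]
    constructor
    · intro h
      obtain ⟨b, hb⟩ := exists_bdry_eq h
      exact ⟨(reindex K (i + 3)).symm b, by simp [hb]⟩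
    · rintro ⟨b, rfl⟩
      rw [LinearEquiv.apply_symm_apply, bdry_bdry]
  homog_aug a := by
    classical
    simp only [LinearMap.comp_apply, LinearEquiv.coe_coe, LinearMap.proj_apply, reindex_single]
    rcases bdry_homog m K ((Fintype.equivFin (Inc s 1)).symm a) (Inc.nil s) with h | ⟨e, he, h⟩
    · rw [h]; exact isHomogeneous_zero _ _ _
    · have h0 : (lcmExp m (Inc.nil s)).degree = 0 := by
        rw [show lcmExp m (Inc.nil s) = 0 by simp [lcmExp]; rfl, map_zero]
      have he' : (lcmExp m ((Fintype.equivFin (Inc s 1)).symm a)).degree = e := by omega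
      exact he' ▸ h
  homog_d i b a := by
    classical
    simp only [LinearMap.comp_apply, LinearEquiv.coe_coe, reindex_single]
    exact bdry_homog m K ((Fintype.equivFin (Inc s (i + 2))).symm b)
      ((Fintype.equivFin (Inc s (i + 1))).symm a)

variable {m K}

/-- A resolution bounds the regularity set: finitely many shifts occur. -/
theorem GradedFreeRes.exists_bound {I : Ideal (MvPolynomial (Fin n) K)} (F : GradedFreeRes K I) :
    ∃ r : ℤ, ∀ i, ∀ a : Fin (F.rank i), (F.shift i a : ℤ) - (i : ℤ) ≤ r := by
  classical
  refine ⟨∑ i ∈ Finset.range (F.len + 1), ∑ a, (F.shift i a : ℤ), fun i a => ?_⟩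
  have hi : i ∈ Finset.range (F.len + 1) := by
    by_contra h
    have := F.rank_zero i (by simpa using h)
    exact (Fin.cast this a).elim0
  have h1 : (F.shift i a : ℤ) ≤ ∑ a, (F.shift i a : ℤ) :=
    Finset.single_le_sum (f := fun a => (F.shift i a : ℤ)) (fun _ _ => by positivity)
      (Finset.mem_univ a)
  have h2 := Finset.single_le_sum (f := fun i => ∑ a, (F.shift i a : ℤ))
    (fun _ _ => by positivity) hi
  have : (0 : ℤ) ≤ i := by positivity
  linarith

/-- `I` is generated by finitely many monomials. -/
def IsMonomialIdeal (I : Ideal (MvPolynomial (Fin n) K)) : Prop :=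
  ∃ E : Set (Fin n →₀ ℕ), E.Finite ∧ I = Ideal.span ((fun a => monomial a (1 : K)) '' E)

theorem IsMonomialIdeal.mul {I J : Ideal (MvPolynomial (Fin n) K)} (hI : IsMonomialIdeal I)
    (hJ : IsMonomialIdeal J) : IsMonomialIdeal (I * J) := by
  obtain ⟨E, hE, rfl⟩ := hI
  obtain ⟨E', hE', rfl⟩ := hJ
  refine ⟨Set.image2 (· + ·) E E', hE.image2 _ hE', ?_⟩
  rw [Ideal.span_mul_span']
  congr 1
  rw [← Set.image2_mul, Set.image2_image_left, Set.image2_image_right, Set.image_image2]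
  simp [monomial_mul]

theorem IsMonomialIdeal.pow {I : Ideal (MvPolynomial (Fin n) K)} (hI : IsMonomialIdeal I) (q : ℕ) :
    IsMonomialIdeal (I ^ q) := by
  induction q with
  | zero =>
    refine ⟨{0}, Set.finite_singleton _, ?_⟩
    simp [Ideal.one_eq_top]
  | succ q ih => rw [pow_succ]; exact ih.mul hI

theorem IsMonomialIdeal.exists_res {I : Ideal (MvPolynomial (Fin n) K)} (hI : IsMonomialIdeal I) :
    Nonempty (GradedFreeRes K I) := by
  obtain ⟨E, hE, rfl⟩ := hI
  obtain ⟨s, m, hm, rfl⟩ := hE.fin_param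
  rw [← Set.range_comp]
  exact ⟨taylorRes m K⟩

theorem isMonomialIdeal_edgeIdeal (G : SimpleGraph (Fin n)) :
    IsMonomialIdeal (edgeIdeal K G) := by
  refine ⟨{a | ∃ i j, G.Adj i j ∧ a = Finsupp.single i 1 + Finsupp.single j 1}, ?_, ?_⟩
  · refine (Set.finite_range fun ij : Fin n × Fin n =>
      (Finsupp.single ij.1 1 + Finsupp.single ij.2 1 : Fin n →₀ ℕ)).subset ?_
    rintro _ ⟨i, j, -, rfl⟩
    exact ⟨(i, j), rfl⟩
  · rw [edgeIdeal]
    congr 1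
    ext f
    constructor
    · rintro ⟨i, j, h, rfl⟩
      exact ⟨_, ⟨i, j, h, rfl⟩, by simp [X, monomial_mul]⟩
    · rintro ⟨_, ⟨i, j, h, rfl⟩, rfl⟩
      exact ⟨i, j, h, by simp [X, monomial_mul]⟩

end Resolution

/-! ### Homogeneous parts of graded free modules -/

section Grading

variable {n : ℕ} {K : Type} [Field K]

/-- The part of degree `e` of a polynomial, seen as an element of `S(-t)`. -/
noncomputable def hc (e t : ℕ) : MvPolynomial (Fin n) K →ₗ[K] MvPolynomial (Fin n) K :=
  if t ≤ e then homogeneousComponent (e - t) else 0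

theorem hc_of_isHomogeneous {e t d : ℕ} {p : MvPolynomial (Fin n) K} (hp : p.IsHomogeneous d) :
    hc e t p = if e = t + d then p else 0 := by
  have := homogeneousComponent_of_mem (m := e - t) ((mem_homogeneousSubmodule d p).2 hp)
  unfold hc
  split_ifs with h1 h2 h2
  · rw [this, if_pos (by omega)]
  · rw [this, if_neg (by omega)]
  · omega
  · rfl

theorem hc_mul {e t k : ℕ} {q : MvPolynomial (Fin n) K} (hq : q.IsHomogeneous k)
    (w : MvPolynomial (Fin n) K) : hc e t (w * q) = hc e (t + k) w * q := by
  have key : hc e t ∘ₗ LinearMap.mulRight K q = LinearMap.mulRight K q ∘ₗ hc e (t + k) := by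
    refine (basisMonomials (Fin n) K).ext fun b => ?_
    have hb : (monomial b (1 : K)).IsHomogeneous b.degree := isHomogeneous_monomial _ rfl
    simp only [coe_basisMonomials, LinearMap.comp_apply, LinearMap.mulRight_apply]
    rw [hc_of_isHomogeneous (hb.mul hq), hc_of_isHomogeneous hb, ite_mul, zero_mul]
    congr 1
    exact propext ⟨fun h => by omega, fun h => by omega⟩
  exact LinearMap.congr_fun key w

theorem isHomogeneous_of_hc {e t : ℕ} {p : MvPolynomial (Fin n) K} (h : hc e t p = p) (ht : t ≤ e) :
    p.IsHomogeneous (e - t) := by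
  rw [hc, if_pos ht] at h
  rw [← h]
  exact homogeneousComponent_isHomogeneous _ _

/-- The homogeneous elements of degree `e` of the graded free module `⨁ₐ S(-s a)`. -/
def homogSub {r : ℕ} (s : Fin r → ℕ) (e : ℕ) : Submodule K (Fin r → MvPolynomial (Fin n) K) where
  carrier := {c | ∀ a, hc e (s a) (c a) = c a}
  add_mem' h h' a := by simp [h a, h' a]
  zero_mem' a := by simp
  smul_mem' x c h a := by simp [h a]

theorem smul_mem_homogSub {r : ℕ} {s : Fin r → ℕ} {e k : ℕ} {c : Fin r → MvPolynomial (Fin n) K}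
    (hc' : c ∈ homogSub s e) {q : MvPolynomial (Fin n) K} (hq : q.IsHomogeneous k) :
    q • c ∈ homogSub s (e + k) := by
  intro a
  have : hc (e + k) (s a + k) = (hc e (s a) : MvPolynomial (Fin n) K →ₗ[K] _) := by
    simp [hc, Nat.add_sub_add_right]
  rw [Pi.smul_apply, smul_eq_mul, mul_comm, hc_mul hq, this, hc' a]

/-- The projection to the part of degree `e` of a graded free module. -/
noncomputable def homogProj {r : ℕ} (s : Fin r → ℕ) (e : ℕ) (w : Fin r → MvPolynomial (Fin n) K) :
    Fin r → MvPolynomial (Fin n) K := fun a => hc e (s a) (w a)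

theorem homogProj_mem {r : ℕ} (s : Fin r → ℕ) (e : ℕ) (w : Fin r → MvPolynomial (Fin n) K) :
    homogProj s e w ∈ homogSub s e := by
  intro a
  by_cases h : s a ≤ e
  · rw [homogProj]
    refine (hc_of_isHomogeneous (d := e - s a) ?_).trans (if_pos (by omega))
    rw [hc, if_pos h]
    exact homogeneousComponent_isHomogeneous _ _
  · simp [homogProj, hc, h]

/-- Homogeneous maps to `S(-t)` commute with the projections to the part of degree `e`. -/
theorem hc_map {r : ℕ} {s : Fin r → ℕ} {t : ℕ}
    (f : (Fin r → MvPolynomial (Fin n) K) →ₗ[MvPolynomial (Fin n) K] MvPolynomial (Fin n) K)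
    (hf : ∀ b, f (Pi.single b 1) = 0 ∨
      ∃ k, s b = t + k ∧ (f (Pi.single b 1)).IsHomogeneous k) (e : ℕ)
    (w : Fin r → MvPolynomial (Fin n) K) : hc e t (f w) = f (homogProj s e w) := by
  have ex : ∀ w, f w = ∑ b, w b * f (Pi.single b 1) := by
    intro w
    conv_lhs => rw [← Finset.univ_sum_single w]
    rw [map_sum]
    refine Finset.sum_congr rfl fun b _ => ?_
    rw [← smul_eq_mul, ← map_smul, ← Pi.single_smul, smul_eq_mul, mul_one]
  rw [ex, ex (homogProj s e w), map_sum]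
  refine Finset.sum_congr rfl fun b _ => ?_
  rcases hf b with h | ⟨k, hk, h⟩
  · simp [h]
  · rw [hc_mul h, ← hk]; rfl

variable {I : Ideal (MvPolynomial (Fin n) K)} (F : GradedFreeRes K I)

theorem GradedFreeRes.d_lift {i e : ℕ} {y : Fin (F.rank i) → MvPolynomial (Fin n) K}
    (hy : y ∈ homogSub (F.shift i) e) (h : y ∈ LinearMap.range (F.d i)) :
    ∃ w ∈ homogSub (F.shift (i + 1)) e, F.d i w = y := by
  obtain ⟨w, rfl⟩ := h
  refine ⟨_, homogProj_mem _ e w, funext fun a => ?_⟩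
  rw [← hy a]
  exact (hc_map (LinearMap.proj a ∘ₗ F.d i) (fun b => F.homog_d i b a) e w).symm

theorem GradedFreeRes.aug_lift {e : ℕ} {y : MvPolynomial (Fin n) K}
    (hy : y.IsHomogeneous e) (h : y ∈ I) :
    ∃ w ∈ homogSub (F.shift 0) e, F.aug w = y := by
  rw [← F.aug_range] at h
  obtain ⟨w, rfl⟩ := h
  refine ⟨_, homogProj_mem _ e w, ?_⟩
  rw [← hc_map F.aug (t := 0) (fun b => Or.inr ⟨_, (zero_add _).symm, F.homog_aug b⟩),
    hc_of_isHomogeneous hy, if_pos (zero_add _).symm]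

end Grading

/-! ### The Koszul complex and vanishing of its homology -/

section Koszul

variable {n : ℕ} {K : Type} [Field K]

/-- The exponents of the variables; the associated Taylor complex is the Koszul complex. -/
noncomputable def kos (n : ℕ) (i : Fin n) : Fin n →₀ ℕ := Finsupp.single i 1

theorem lcmExp_kos {p : ℕ} (t : Inc n p) :
    lcmExp (kos n) t = ∑ k, Finsupp.single (t.1 k) 1 := by
  classical
  apply le_antisymm
  · rw [lcmExp_le_iff]
    intro k
    exact Finset.single_le_sum (f := fun k => (Finsupp.single (t.1 k) 1 : Fin n →₀ ℕ))
      (fun _ _ => zero_le) (Finset.mem_univ k)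
  · intro v
    rw [Finsupp.finsetSum_apply]
    by_cases h : ∃ k, t.1 k = v
    · obtain ⟨k, rfl⟩ := h
      rw [Finset.sum_eq_single k]
      · exact (lcmExp_le_iff (kos n) t _).1 le_rfl k _
      · intro l _ hl
        exact Finsupp.single_eq_of_ne' fun h => hl (t.2.injective h)
      · simp
    · push Not at h
      rw [Finset.sum_eq_zero fun k _ => Finsupp.single_eq_of_ne' (h k)]
      exact zero_le

theorem taylorCoeff_kos {p : ℕ} (t : Inc n (p + 1)) (k : Fin (p + 1)) :
    taylorCoeff (kos n) K t k = X (t.1 k) := by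
  rw [taylorCoeff, X]
  congr 2
  rw [lcmExp_kos, lcmExp_kos, Fin.sum_univ_succAbove _ k]
  exact add_tsub_cancel_right _ _

theorem bdry_mem_homogSub {p r : ℕ} {s : Fin r → ℕ} {e : ℕ}
    {z : Inc n (p + 1) → Fin r → MvPolynomial (Fin n) K} (hz : ∀ t, z t ∈ homogSub s e)
    (u : Inc n p) : bdry (K := K) (kos n) p z u ∈ homogSub s (e + 1) := by
  classical
  rw [bdry_apply, Finset.sum_apply]
  refine Submodule.sum_mem _ fun t _ => ?_
  rw [Finset.sum_apply]
  refine Submodule.sum_mem _ fun k _ => ?_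
  rw [Pi.smul_apply]
  refine smul_mem_homogSub ?_ ?_
  · by_cases h : u = t.face k
    · subst h; simpa using hz t
    · rw [Pi.single_eq_of_ne h]; exact Submodule.zero_mem _
  · rw [taylorCoeff_kos, show (-1 : MvPolynomial (Fin n) K) ^ (k : ℕ) = C ((-1 : K) ^ (k : ℕ)) by simp]
    exact (isHomogeneous_X _ _).C_mul _

/-- Cycles of the Koszul complex, every chain of degree `0` being a cycle. -/
def IsCyc {M : Type} [AddCommGroup M] [Module (MvPolynomial (Fin n) K) M] :
    ∀ p : ℕ, (Inc n p → M) → Prop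
  | 0, _ => True
  | p + 1, c => bdry (K := K) (kos n) p c = 0

/-- Elements of positive degree of a graded free module are Koszul boundaries. -/
theorem exists_bdry_eq_zero {r : ℕ} {s : Fin r → ℕ} {e : ℕ} (hs : ∀ a, s a < e)
    {z : Inc n 0 → Fin r → MvPolynomial (Fin n) K} (hz : ∀ t, z t ∈ homogSub s e) :
    ∃ b, bdry (K := K) (kos n) 0 b = z := by
  have h1 : ∀ a, ∃ c, bdry (K := K) (M := MvPolynomial (Fin n) K) (kos n) 0 c (Inc.nil n) =
      z (Inc.nil n) a := by
    intro a
    have hmem : z (Inc.nil n) a ∈ Ideal.span (Set.range fun i => monomial (kos n i) (1 : K)) := by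
      rw [Set.range_comp' (fun b => monomial b (1 : K)) (kos n), mem_ideal_span_monomial_image]
      intro b hb
      have hhom := isHomogeneous_of_hc (hz (Inc.nil n) a) (hs a).le
      have hdeg := hhom (mem_support_iff.1 hb)
      have hb0 : b ≠ 0 := by
        rintro rfl
        have := hs a
        simp at hdeg
        omega
      obtain ⟨i, hi⟩ := Finsupp.ne_iff.1 hb0
      refine ⟨_, ⟨i, rfl⟩, ?_⟩
      rw [kos, Finsupp.single_le_iff]
      exact Nat.one_le_iff_ne_zero.2 hi
    rw [← range_bdry_zero] at hmem
    exact hmem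
  choose c hc using h1
  refine ⟨fun t a => c a t, ?_⟩
  funext t a
  rw [Subsingleton.elim t (Inc.nil n), ← hc a]
  exact (congrFun (bdry_map (K := K) (kos n) (LinearMap.proj (R := MvPolynomial (Fin n) K)
    (φ := fun _ : Fin r => MvPolynomial (Fin n) K) a) (fun t a => c a t)) _).symm

variable {I : Ideal (MvPolynomial (Fin n) K)} (F : GradedFreeRes K I)

/-- Koszul homology of the syzygy modules vanishes in large degrees: if the generators of the
`i`-th free module have degree at most `r + i`, then `H_p` of the image of the `i`-th free module
vanishes in internal degrees greater than `r + i` (the degree of the coefficients). The proof is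
the comparison of the Koszul complex with the resolution, one step of the zigzag at a time. -/
theorem GradedFreeRes.koszul_vanishing {r : ℤ}
    (hF : ∀ i, ∀ a : Fin (F.rank i), (F.shift i a : ℤ) - (i : ℤ) ≤ r) (p : ℕ) :
    ∀ (i : ℕ) (M : Type) [AddCommGroup M] [Module (MvPolynomial (Fin n) K) M]
      (f : (Fin (F.rank i) → MvPolynomial (Fin n) K) →ₗ[MvPolynomial (Fin n) K] M),
      LinearMap.ker f = LinearMap.range (F.d i) → ∀ (e : ℕ), r + i < e →
      ∀ z : Inc n p → Fin (F.rank i) → MvPolynomial (Fin n) K,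
      (∀ t, z t ∈ homogSub (F.shift i) e) → IsCyc (K := K) p (fun t => f (z t)) →
      ∃ u : Inc n (p + 1) → Fin (F.rank i) → MvPolynomial (Fin n) K,
        bdry (K := K) (kos n) p (fun t => f (u t)) = fun t => f (z t) := by
  induction p with
  | zero =>
    intro i M _ _ f _ e he z hz _
    obtain ⟨u, rfl⟩ := exists_bdry_eq_zero (fun a => by have := hF i a; omega) hz
    exact ⟨u, bdry_map _ f u⟩
  | succ p ih =>
    intro i M _ _ f hf e he z hz hcyc
    change bdry (K := K) (kos n) p (fun t => f (z t)) = 0 at hcyc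
    rw [bdry_map] at hcyc
    have h1 : ∀ t, ∃ w ∈ homogSub (F.shift (i + 1)) (e + 1),
        F.d i w = bdry (K := K) (kos n) p z t := fun t =>
      F.d_lift (bdry_mem_homogSub hz t) (hf ▸ LinearMap.mem_ker.2 (congrFun hcyc t))
    choose z' hz' hdz' using h1
    obtain ⟨u', hu'⟩ := ih (i + 1) _ (F.d i) (F.exact_succ i) (e + 1) (by push_cast; omega) z' hz' (by
      simp only [hdz']
      cases p with
      | zero => trivial
      | succ p => exact bdry_bdry _ z)
    obtain ⟨u, hu⟩ := exists_bdry_eq_pi (K := K) (m := kos n) (c := z - fun t => F.d i (u' t)) (by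
      rw [map_sub, hu', sub_eq_zero]
      exact (funext hdz').symm)
    refine ⟨u, ?_⟩
    rw [bdry_map, hu]
    funext t
    have : F.d i (u' t) ∈ LinearMap.ker f := hf ▸ ⟨_, rfl⟩
    rw [Pi.sub_apply, map_sub, LinearMap.mem_ker.1 this, sub_zero]

end Koszul

/-! ### The cochain detecting the Koszul class -/

section Detection

variable {n N : ℕ} (K : Type) [Field K] (a b : Fin (N + 1) → Fin n)

/-- Indicator of the `i`-th edge of the matching `{a i, b i}`. -/
noncomputable def ind (i : Fin (N + 1)) (v : Fin n) : K := if v = a i ∨ v = b i then 1 else 0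

/-- A cochain on increasing `N`-tuples. When the edges `{a i, b i}` are disjoint, it is `±1` on the
tuples that meet each edge except the first exactly once, the sign being that of the resulting
permutation, and `0` on all others. -/
noncomputable def phi (t : Inc n N) : K :=
  Matrix.det (Matrix.of fun k j : Fin N => ind K a b j.succ (t.1 k))

/-- The matrix whose determinant is the coboundary of `phi`: a column of ones followed by the
indicators of all the edges except the first. -/
noncomputable def detMat (t : Inc n (N + 1)) : Matrix (Fin (N + 1)) (Fin (N + 1)) K :=
  Matrix.of fun k => Fin.cons 1 (fun j : Fin N => ind K a b j.succ (t.1 k))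

theorem det_detMat (t : Inc n (N + 1)) :
    (detMat K a b t).det = ∑ k : Fin (N + 1), (-1) ^ (k : ℕ) * phi K a b (t.face k) := by
  rw [Matrix.det_succ_column_zero]
  refine Finset.sum_congr rfl fun k _ => ?_
  have : (detMat K a b t).submatrix k.succAbove Fin.succ =
      Matrix.of fun l j : Fin N => ind K a b j.succ ((t.face k).1 l) := by
    ext l j
    simp [detMat, Inc.face]
  rw [this]
  simp [detMat, phi]

/-- Evaluation of `phi` on Koszul chains, with values in the polynomial ring. -/
noncomputable def psi : (Inc n N → MvPolynomial (Fin n) K) →ₗ[MvPolynomial (Fin n) K]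
    MvPolynomial (Fin n) K :=
  ∑ t, (C (phi K a b t) * monomial (lcmExp (kos n) t) 1 : MvPolynomial (Fin n) K) •
    LinearMap.proj t

theorem psi_single [DecidableEq (Inc n N)] (t : Inc n N) (x : MvPolynomial (Fin n) K) :
    psi K a b (Pi.single t x) = C (phi K a b t) * monomial (lcmExp (kos n) t) 1 * x := by
  rw [psi, LinearMap.sum_apply, Finset.sum_eq_single t]
  · simp
  · intro u _ hu
    simp [Pi.single_eq_of_ne hu]
  · simp

theorem psi_bdry (c : Inc n (N + 1) → MvPolynomial (Fin n) K) :
    psi K a b (bdry (K := K) (kos n) N c) =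
      ∑ t, C (detMat K a b t).det * (monomial (lcmExp (kos n) t) 1 * c t) := by
  classical
  rw [bdry_apply, map_sum]
  refine Finset.sum_congr rfl fun t _ => ?_
  rw [map_sum, det_detMat, map_sum, Finset.sum_mul]
  refine Finset.sum_congr rfl fun k _ => ?_
  have h : taylorCoeff (kos n) K t k * monomial (lcmExp (kos n) (t.face k)) 1 =
      monomial (lcmExp (kos n) t) 1 := by
    rw [taylorCoeff, monomial_mul, mul_one, tsub_add_cancel_of_le (lcmExp_face_le _ t k)]
  rw [map_smul, psi_single, ← h, smul_eq_mul]
  simp only [map_mul, map_pow, map_neg, C_1]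
  ring

variable {K a b}

theorem det_detMat_self (ha : StrictMono a) (hd : ∀ i j, i ≠ j → a i ≠ b j) :
    (detMat K a b ⟨a, ha⟩).det = 1 := by
  have e : ∀ (k : Fin (N + 1)) (j : Fin N), k ≠ j.succ → ind K a b j.succ (a k) = 0 := fun k j h => by
    simp [ind, ha.injective.eq_iff, h, hd k j.succ h]
  rw [Matrix.det_of_isLowerTriangular]
  · refine Finset.prod_eq_one fun k _ => ?_
    refine Fin.cases ?_ (fun j => ?_) k <;> simp [detMat, ind]
  · intro k j
    refine Fin.cases ?_ (fun j => ?_) j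
    · exact fun h => absurd (OrderDual.toDual_lt_toDual.1 h) (Fin.not_lt_zero k)
    · intro h
      simp only [detMat, Matrix.of_apply, Fin.cons_succ]
      exact e k j (ne_of_lt (by simpa using h))

/-- If the coboundary of `phi` does not vanish at a tuple of matched vertices, then the tuple meets
every edge of the matching. -/
theorem exists_hit (hdisj : ∀ i j, i ≠ j → ∀ v, (v = a i ∨ v = b i) → ¬ (v = a j ∨ v = b j))
    {t : Inc n (N + 1)} (ht : ∀ k, ∃ i, t.1 k = a i ∨ t.1 k = b i)
    (hdet : (detMat K a b t).det ≠ 0) (i : Fin (N + 1)) : ∃ k, t.1 k = a i ∨ t.1 k = b i := by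
  by_contra hno
  push Not at hno
  apply hdet
  revert hno
  refine Fin.cases (fun hno => ?_) (fun j hno => ?_) i
  · -- The first column is the sum of the others.
    rw [← Matrix.exists_mulVec_eq_zero_iff]
    refine ⟨Fin.cons 1 fun _ => -1, fun h => by simpa using congrFun h 0, ?_⟩
    funext k
    obtain ⟨i, hi⟩ := ht k
    have hi0 : i ≠ 0 := by
      rintro rfl
      exact (hi.elim (hno k).1 (hno k).2)
    obtain ⟨j, rfl⟩ := Fin.exists_succ_eq.2 hi0
    have e : ∀ l : Fin N, ind K a b l.succ (t.1 k) = if l = j then 1 else 0 := by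
      intro l
      split_ifs with h
      · subst h; exact if_pos hi
      · exact if_neg (hdisj j.succ l.succ (fun h' => h (Fin.succ_injective _ h').symm) _ hi)
    simp [Matrix.mulVec, dotProduct, Fin.sum_univ_succ, detMat, e]
  · refine Matrix.det_eq_zero_of_column_eq_zero j.succ fun k => ?_
    simp [detMat, ind, hno k]

/-- Monomials of `I(G) ^ q` have weight at least `q` on every vertex cover. -/
theorem le_weight (G : SimpleGraph (Fin n)) (c : Finset (Fin n))
    (hc : ∀ u v, G.Adj u v → u ∈ c ∨ v ∈ c) (q : ℕ) :
    ∀ p ∈ edgeIdeal K G ^ q, ∀ x ∈ p.support, q ≤ ∑ v ∈ c, x v := by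
  classical
  induction q with
  | zero => simp
  | succ q ih =>
    intro p hp
    rw [pow_succ] at hp
    refine Submodule.mul_induction_on hp (fun f hf g hg x hx => ?_) (fun f g hf hg x hx => ?_)
    · obtain ⟨y, hy, z, hz, rfl⟩ := Finset.mem_add.1 (support_mul f g hx)
      have hle : edgeIdeal K G ≤ Ideal.span (X '' (c : Set (Fin n))) := by
        refine Ideal.span_le.2 ?_
        rintro _ ⟨u, v, h, rfl⟩
        rcases hc u v h with h | h
        · exact Ideal.mul_mem_right _ _ (Ideal.subset_span ⟨u, h, rfl⟩)
        · exact Ideal.mul_mem_left _ _ (Ideal.subset_span ⟨v, h, rfl⟩)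
      obtain ⟨v, hv, hzv⟩ := mem_ideal_span_X_image.1 (hle hg) z hz
      have h1 := ih f hf y hy
      have h2 : z v ≤ ∑ v ∈ c, z v := Finset.single_le_sum (fun _ _ => zero_le) hv
      simp only [Finsupp.add_apply, Finset.sum_add_distrib]
      omega
    · rcases Finset.mem_union.1 (support_add hx) with h | h
      exacts [hf x h, hg x h]

/-- The multidegree of the Koszul class. -/
noncomputable def alpha (a b : Fin (N + 1) → Fin n) (q : ℕ) : Fin n →₀ ℕ :=
  ∑ i, (Finsupp.single (a i) 1 + Finsupp.single (b i) 1) +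
    q • (Finsupp.single (a 0) 1 + Finsupp.single (b 0) 1)

theorem weight_single (c : Finset (Fin n)) (u : Fin n) :
    ∑ v ∈ c, (Finsupp.single u 1 : Fin n →₀ ℕ) v = if u ∈ c then 1 else 0 := by
  classical
  simp [Finsupp.single_apply]

/-- No chain with coefficients in `I(G) ^ (q + 1)` is detected by the coboundary of `phi` in the
multidegree `alpha a b q`. The vertex cover consists of the vertices of the tuple and of the
unmatched vertices. -/
theorem coeff_eq_zero (G : SimpleGraph (Fin n)) (hadj : ∀ i, G.Adj (a i) (b i))
    (hsep : ∀ i j, i ≠ j → ∀ u v, (u = a i ∨ u = b i) → (v = a j ∨ v = b j) →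
      u ≠ v ∧ ¬ G.Adj u v) (q : ℕ) (t : Inc n (N + 1)) (p : MvPolynomial (Fin n) K)
    (hp : p ∈ edgeIdeal K G ^ (q + 1)) :
    coeff (alpha a b q) (C (detMat K a b t).det * (monomial (lcmExp (kos n) t) 1 * p)) = 0 := by
  classical
  rw [coeff_C_mul, coeff_monomial_mul', mul_ite, mul_zero, one_mul]
  split_ifs with hle
  swap
  · rfl
  by_contra hne
  have hdet := left_ne_zero_of_mul hne
  have hsupp := mem_support_iff.2 (right_ne_zero_of_mul hne)
  have hdisj : ∀ i j, i ≠ j → ∀ v, (v = a i ∨ v = b i) → ¬ (v = a j ∨ v = b j) :=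
    fun i j hij v h h' => (hsep i j hij v v h h').1 rfl
  have hmatch : ∀ k, ∃ i, t.1 k = a i ∨ t.1 k = b i := by
    intro k
    by_contra hno
    push Not at hno
    have h1 := (lcmExp_le_iff (kos n) t _).1 hle k (t.1 k)
    have h2 : alpha a b q (t.1 k) = 0 := by
      simp [alpha, fun i => (hno i).1.symm,
        fun i => (hno i).2.symm]
    rw [h2, kos, Finsupp.single_eq_same] at h1
    omega
  have hhit := exists_hit hdisj hmatch hdet
  choose π hπ using hmatch
  have hπ' : ∀ k i, (t.1 k = a i ∨ t.1 k = b i) → π k = i := fun k i h => by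
    by_contra hne
    exact hdisj _ _ hne _ (hπ k) h
  have hinj : Function.Injective π := Finite.injective_iff_surjective.2 fun i =>
    (hhit i).imp fun k hk => hπ' k i hk
  let c : Finset (Fin n) :=
    Finset.univ.filter fun v => (∃ k, t.1 k = v) ∨ ∀ i, v ≠ a i ∧ v ≠ b i
  have hcover : ∀ u v, G.Adj u v → u ∈ c ∨ v ∈ c := by
    intro u v huv
    by_contra hno
    simp only [c, Finset.mem_filter, Finset.mem_univ, true_and, not_or, not_forall, not_exists] at hno
    obtain ⟨⟨hu, i, hi⟩, hv, j, hj⟩ := hno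
    have hi' : u = a i ∨ u = b i := by tauto
    have hj' : v = a j ∨ v = b j := by tauto
    have hij : i = j := by
      by_contra hne
      exact (hsep i j hne u v hi' hj').2 huv
    subst hij
    have huv' := huv.ne
    obtain ⟨k, hk⟩ := hhit i
    have := hu k
    have := hv k
    grind
  have hone : ∀ i, (if a i ∈ c then 1 else 0) + (if b i ∈ c then 1 else 0) ≤ 1 := by
    intro i
    by_cases h1 : a i ∈ c
    · by_cases h2 : b i ∈ c
      · exfalso
        simp only [c, Finset.mem_filter, Finset.mem_univ, true_and] at h1 h2
        rcases h1 with ⟨k, hk⟩ | h1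
        · rcases h2 with ⟨l, hl⟩ | h2
          · have hkl : k = l := hinj ((hπ' k i (Or.inl hk)).trans (hπ' l i (Or.inr hl)).symm)
            subst hkl
            exact (hadj i).ne (hk.symm.trans hl)
          · exact (h2 i).2 rfl
        · exact (h1 i).1 rfl
      · simp [h1, h2]
    · split_ifs <;> simp
  have hw := le_weight G c hcover (q + 1) p hp _ hsupp
  have hsplit : ∑ v ∈ c, alpha a b q v =
      ∑ v ∈ c, (alpha a b q - lcmExp (kos n) t) v + ∑ v ∈ c, lcmExp (kos n) t v := by
    rw [← Finset.sum_add_distrib]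
    refine Finset.sum_congr rfl fun v _ => ?_
    rw [← Finsupp.add_apply, tsub_add_cancel_of_le hle]
  have hlcm : ∑ v ∈ c, lcmExp (kos n) t v = N + 1 := by
    simp only [lcmExp_kos, Finsupp.finsetSum_apply]
    rw [Finset.sum_comm]
    simp only [weight_single]
    rw [Finset.sum_congr rfl (fun k _ => if_pos (show t.1 k ∈ c by simp [c]))]
    simp
  have halpha : ∑ v ∈ c, alpha a b q v ≤ N + 1 + q := by
    simp only [alpha, Finsupp.add_apply, Finsupp.finsetSum_apply, Finsupp.smul_apply,
      Finset.sum_add_distrib, smul_eq_mul, ← Finset.mul_sum]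
    rw [Finset.sum_comm (s := c), Finset.sum_comm (s := c)]
    simp only [weight_single]
    rw [← Finset.sum_add_distrib]
    refine Nat.add_le_add ?_ ?_
    · exact (Finset.sum_le_sum fun i _ => hone i).trans (by simp)
    · exact (Nat.mul_le_mul_left q (hone 0)).trans (by simp)
  omega

/-- The lower bound for the shifts in a resolution, for a matching with a chosen orientation. -/
theorem bound_of_matching (G : SimpleGraph (Fin n)) (ha : StrictMono a)
    (hadj : ∀ i, G.Adj (a i) (b i))
    (hsep : ∀ i j, i ≠ j → ∀ u v, (u = a i ∨ u = b i) → (v = a j ∨ v = b j) →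
      u ≠ v ∧ ¬ G.Adj u v) (q : ℕ) (F : GradedFreeRes K (edgeIdeal K G ^ (q + 1))) (r : ℤ)
    (hF : ∀ i, ∀ a : Fin (F.rank i), (F.shift i a : ℤ) - (i : ℤ) ≤ r) :
    (2 * q + N + 2 : ℤ) ≤ r := by
  classical
  by_contra! hr
  let σ : Inc n (N + 1) := ⟨a, ha⟩
  let μ : MvPolynomial (Fin n) K := (∏ i, X (b i)) * (X (a 0) * X (b 0)) ^ q
  have hedge : ∀ i, (X (a i) * X (b i) : MvPolynomial (Fin n) K) ∈ edgeIdeal K G := fun i =>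
    Ideal.subset_span ⟨_, _, hadj i, rfl⟩
  have hμ : ∀ k, X (a k) * μ ∈ edgeIdeal K G ^ (q + 1) := by
    intro k
    have : X (a k) * μ = (∏ i ∈ Finset.univ.erase k, X (b i)) *
        ((X (a 0) * X (b 0)) ^ q * (X (a k) * X (b k))) := by
      simp only [μ]
      rw [← Finset.mul_prod_erase Finset.univ _ (Finset.mem_univ k)]
      ring
    rw [this, pow_succ]
    exact Ideal.mul_mem_left _ _ (Ideal.mul_mem_mul (Ideal.pow_mem_pow (hedge 0) q) (hedge k))
  have hμhom : μ.IsHomogeneous (N + 1 + 2 * q) := by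
    have h1 : (∏ i, X (b i) : MvPolynomial (Fin n) K).IsHomogeneous (∑ _i : Fin (N + 1), 1) :=
      IsHomogeneous.prod _ _ _ fun i _ => isHomogeneous_X _ _
    have h2 := (((isHomogeneous_X K (a 0)).mul (isHomogeneous_X K (b 0))).pow q)
    simpa using h1.mul h2
  let c : Inc n N → MvPolynomial (Fin n) K := bdry (K := K) (kos n) N (Pi.single σ μ)
  have hc : ∀ t, c t ∈ edgeIdeal K G ^ (q + 1) ∧ (c t).IsHomogeneous (2 * q + N + 2) := by
    intro t
    have e : c t = ∑ k, if t = σ.face k then C ((-1 : K) ^ (k : ℕ)) * (X (a k) * μ) else 0 := by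
      simp only [c]
      rw [bdry_single, Finset.sum_apply]
      refine Finset.sum_congr rfl fun k _ => ?_
      rw [taylorCoeff_kos, Pi.smul_apply, Pi.single_apply, smul_ite, smul_zero]
      simp [σ, mul_assoc]
    rw [e]
    constructor
    · refine Ideal.sum_mem _ fun k _ => ?_
      split_ifs
      exacts [Ideal.mul_mem_left _ _ (hμ k), Ideal.zero_mem _]
    · refine IsHomogeneous.sum _ _ _ fun k _ => ?_
      split_ifs
      · refine IsHomogeneous.C_mul ?_ _
        have := (isHomogeneous_X K (a k)).mul hμhom
        rwa [show 1 + (N + 1 + 2 * q) = 2 * q + N + 2 by ring] at this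
      · exact isHomogeneous_zero _ _ _
  choose z hz hzc using fun t => F.aug_lift (hc t).2 (hc t).1
  obtain ⟨u, hu⟩ := F.koszul_vanishing hF N 0 _ F.aug F.exact_zero (2 * q + N + 2)
    (by push_cast; omega) z hz (by
      simp only [hzc]
      cases N with
      | zero => trivial
      | succ N => exact bdry_bdry _ _)
  simp only [hzc] at hu
  have h1 := congrArg (fun c => coeff (alpha a b q) (psi K a b c)) hu
  have h2 : ∀ t, F.aug (u t) ∈ edgeIdeal K G ^ (q + 1) := fun t =>
    F.aug_range.le ⟨_, rfl⟩
  have h3 : psi K a b (fun t => c t) = monomial (alpha a b q) 1 := by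
    change psi K a b (bdry (K := K) (kos n) N (Pi.single σ μ)) = _
    rw [psi_bdry, Finset.sum_eq_single σ]
    · rw [det_detMat_self ha fun i j hij => (hsep i j hij _ _ (Or.inl rfl) (Or.inr rfl)).1,
        Pi.single_eq_same, lcmExp_kos]
      simp only [μ, σ, X, alpha, map_one, one_mul, monomial_mul, mul_one, monomial_pow,
        ← monomial_sum_one, one_pow, Finset.sum_add_distrib]
      rw [add_assoc]
    · intro t _ ht
      simp [Pi.single_eq_of_ne ht]
    · simp
  simp only [h3, psi_bdry, coeff_sum, coeff_monomial, if_true] at h1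
  rw [Finset.sum_eq_zero fun t _ => coeff_eq_zero G hadj hsep q t _ (h2 t)] at h1
  exact zero_ne_one h1

end Detection

/-! ### Maximum induced matchings -/

section Matching

variable {n : ℕ} (G : SimpleGraph (Fin n))

theorem bddAbove_matching :
    BddAbove { k | ∃ M : Finset (Sym2 (Fin n)), IsInducedMatching G M ∧ M.card = k } := by
  classical
  refine ⟨Fintype.card (Sym2 (Fin n)), ?_⟩
  rintro _ ⟨M, -, rfl⟩
  exact Finset.card_le_univ M

theorem one_le_indMatchNum (hG : ∃ u v, G.Adj u v) : 1 ≤ indMatchNum G := by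
  obtain ⟨u, v, h⟩ := hG
  refine le_csSup (bddAbove_matching G) ⟨{s(u, v)}, ⟨by simpa using h, ?_⟩, by simp⟩
  intro e he f hf hne
  simp only [Finset.mem_singleton] at he hf
  exact absurd (he.trans hf.symm) hne

/-- A maximum induced matching, with its edges oriented and ordered by their first vertices. -/
theorem exists_matching (N : ℕ) (hN : indMatchNum G = N + 1) :
    ∃ a b : Fin (N + 1) → Fin n, StrictMono a ∧ (∀ i, G.Adj (a i) (b i)) ∧
      ∀ i j, i ≠ j → ∀ u v, (u = a i ∨ u = b i) → (v = a j ∨ v = b j) → u ≠ v ∧ ¬ G.Adj u v := by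
  classical
  obtain ⟨M, hM, hcard⟩ : indMatchNum G ∈
      { k | ∃ M : Finset (Sym2 (Fin n)), IsInducedMatching G M ∧ M.card = k } :=
    Nat.sSup_mem ⟨0, ∅, ⟨by simp, by simp⟩, rfl⟩ (bddAbove_matching G)
  have hout : ∀ e : Sym2 (Fin n), e = s(e.out.1, e.out.2) := fun e => (Quot.out_eq e).symm
  have hinj : Set.InjOn (fun e : Sym2 (Fin n) => e.out.1) M := by
    intro e he f hf hef
    by_contra hne
    exact (hM.2 e he f hf hne _ (Sym2.out_fst_mem e) _ (Sym2.out_fst_mem f)).1 hef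
  have hR : (M.image fun e => e.out.1).card = N + 1 := by
    rw [Finset.card_image_of_injOn hinj, hcard, hN]
  have hmem : ∀ i, ∃ e ∈ M, e.out.1 = (M.image fun e => e.out.1).orderEmbOfFin hR i := fun i =>
    Finset.mem_image.1 (Finset.orderEmbOfFin_mem _ hR i)
  choose e heM he using hmem
  refine ⟨fun i => (M.image fun e => e.out.1).orderEmbOfFin hR i, fun i => (e i).out.2,
    OrderEmbedding.strictMono _, fun i => ?_, fun i j hij u v hu hv => ?_⟩
  · beta_reduce
    rw [← he, ← SimpleGraph.mem_edgeSet, ← hout]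
    exact hM.1 (heM i)
  · beta_reduce at hu hv
    rw [← he i] at hu
    rw [← he j] at hv
    have hne : e i ≠ e j := fun h => hij <| by
      have := he i
      rw [h, he j] at this
      exact ((RelEmbedding.injective _) this).symm
    have key : ∀ (i) (w), (w = (e i).out.1 ∨ w = (e i).out.2) → w ∈ e i := by
      rintro i w (rfl | rfl)
      exacts [Sym2.out_fst_mem _, Sym2.out_snd_mem _]
    exact hM.2 _ (heM i) _ (heM j) hne u (key i u hu) v (key j v hv)

end Matching

/-- **Beyarslan–Hà–Trung's lower bound.**  Let `G` be any graph with at least one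
edge and `I = I(G)` its edge ideal.  Then for all `q ≥ 1`,
`reg I^q ≥ 2q + ν(G) - 1`, where `ν(G)` is the induced matching number of `G`. -/
theorem regularity_pow_ge {n : ℕ} (K : Type) [Field K]
    (G : SimpleGraph (Fin n)) (hG : ∃ u v, G.Adj u v) :
    ∀ q : ℕ, 1 ≤ q →
      2 * (q : ℤ) + (indMatchNum G : ℤ) - 1 ≤ reg K ((edgeIdeal K G) ^ q) := by
  intro q hq
  obtain ⟨q, rfl⟩ : ∃ q', q = q' + 1 := ⟨q - 1, by omega⟩
  obtain ⟨N, hN⟩ : ∃ N, indMatchNum G = N + 1 :=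
    ⟨indMatchNum G - 1, by have := one_le_indMatchNum G hG; omega⟩
  obtain ⟨a, b, ha, hadj, hsep⟩ := exists_matching G N hN
  -- The set of admissible bounds is nonempty, so the infimum is not the junk value `0`.
  obtain ⟨F⟩ := ((isMonomialIdeal_edgeIdeal (K := K) G).pow (q + 1)).exists_res
  refine le_csInf ⟨_, F, F.exists_bound.choose_spec⟩ ?_
  rintro r ⟨F, hF⟩
  have := bound_of_matching G ha hadj hsep q F r hF
  rw [hN]
  push_cast
  omega
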